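/- Let b be a prime and t ≥ 0 an integer. Let D_1, D_2 be generating matrices of a digital (0,2)-sequence over F_b, and let C_1, C_2 be obtained from D_1, D_2 by prepending t zero columns, i.e., C_j(i,r) = 0 for 1 ≤ r ≤ t and C_j(i,r) = D_j(i, r − t) for r > t. Let m ≥ t, let w_1 = 0 and let w_2 be an integer with 0 ≤ w_2 and m − w_2 − t ≥ 0, and let C̃_1^{(m)} = C_1^{(m)} and C̃_2^{(m)} be the column reduction of C_2^{(m)} with reduction index w_2. Then ρ_m(C̃_1^{(m)}, C̃_2^{(m)}) = m − t − w_2; in particular, the first m − t − w_2 + 1 rows of C̃_2^{(m)} are linearly dependent over F_b. -/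

import Mathlib

open Finset

/-- The family consisting of the first `d j` rows of each of the matrices `C j`
(a row index `≥ m` yields the zero vector). -/
def rowFamily {b s m : ℕ} (C : Fin s → Matrix (Fin m) (Fin m) (ZMod b))
    (d : Fin s → ℕ) : (Σ j : Fin s, Fin (d j)) → (Fin m → ZMod b) :=
  fun p r => if h : (p.2 : ℕ) < m then C p.1 ⟨(p.2 : ℕ), h⟩ r else 0

/-- The first `d j` rows of the matrices `C j` are linearly independent over `𝔽_b`. -/
def RowsLI {b s m : ℕ} (C : Fin s → Matrix (Fin m) (Fin m) (ZMod b))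
    (d : Fin s → ℕ) : Prop :=
  LinearIndependent (ZMod b) (rowFamily C d)

/-- The linear independence parameter `ρ_m(C_1, …, C_s)`: the largest `ρ` such that for
every choice of nonnegative integers `d_1 + ⋯ + d_s = ρ`, the corresponding first rows
of the matrices are linearly independent. -/
noncomputable def rho {b s m : ℕ} (C : Fin s → Matrix (Fin m) (Fin m) (ZMod b)) : ℕ :=
  sSup {ρ : ℕ | ∀ d : Fin s → ℕ, ∑ j, d j = ρ → RowsLI C d}

/-- Left upper `k × k` submatrix of an infinite matrix. -/
def upperLeft {b : ℕ} (C : Matrix ℕ ℕ (ZMod b)) (k : ℕ) :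
    Matrix (Fin k) (Fin k) (ZMod b) :=
  Matrix.of fun i r => C (i : ℕ) (r : ℕ)

/-- Column reduction with reduction index `w`: the first `m - min m w` columns are kept,
the last `min m w` columns are set to zero. -/
def colReduce {b m : ℕ} (C : Matrix (Fin m) (Fin m) (ZMod b)) (w : ℕ) :
    Matrix (Fin m) (Fin m) (ZMod b) :=
  Matrix.of fun i r => if (r : ℕ) < m - min m w then C i r else 0

/-- `C` is a family of generating matrices of a digital `(t,s)`-sequence over `𝔽_b`. -/
def IsDigitalSeq {b s : ℕ} (C : Fin s → Matrix ℕ ℕ (ZMod b)) (t : ℕ) : Prop :=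
  ∀ k : ℕ, max t 1 ≤ k → k - t ≤ rho (fun j => upperLeft (C j) k)

/-!
After prepending `t` zero columns to `D` and reducing with index `w`, the upper left `m × m` block
is supported on the columns `t, …, m - w - 1`. There are `m - t - w` of these, so no more than
`m - t - w` of its rows are independent. Conversely, with `w` the largest reduction index, deleting
all other columns turns the first `m - t - w` rows into those of the upper left block of `D` of
size `m - t - w`, where independence is the digital `(0,s)`-sequence property; and vectors with
independent restrictions are independent.
-/

section LinearIndependent

variable {R ι n : Type*} [Semiring R] {v : ι → n → R}

lemma linearIndependent_comp_val_of_support_subset {S : Finset n} (hv : LinearIndependent R v)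
    (hS : ∀ i, ∀ r ∉ S, v i r = 0) :
    LinearIndependent R fun i (r : S) => v i r := by
  have hext : v = Function.ExtendByZero.linearMap R ((↑) : S → n) ∘ fun i (r : S) => v i r := by
    ext i r
    by_cases hr : r ∈ S
    · exact (Subtype.val_injective.extend_apply (fun r : S => v i r) 0 ⟨r, hr⟩).symm
    · have hr' : ¬ ∃ a : S, (a : n) = r := by simpa using hr
      exact (hS i r hr).trans
        (Function.extend_apply' (fun r : S => v i r) (0 : n → R) r hr').symm
  rw [hext] at hv
  exact hv.of_comp

lemma card_le_of_linearIndependent_of_support_subset [StrongRankCondition R] [Fintype ι]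
    {S : Finset n} (hv : LinearIndependent R v) (hS : ∀ i, ∀ r ∉ S, v i r = 0) :
    Fintype.card ι ≤ #S := by
  simpa using (linearIndependent_comp_val_of_support_subset hv hS).fintype_card_le_finrank

end LinearIndependent

section Rho

variable {b s m n : ℕ} {C : Fin s → Matrix (Fin m) (Fin m) (ZMod b)} {d : Fin s → ℕ}

lemma rowsLI_of_sum_eq_zero (hd : ∑ j, d j = 0) : RowsLI C d := by
  have hd' : ∀ j, d j = 0 := by simpa using hd
  have : IsEmpty (Σ j, Fin (d j)) := by simp [hd', Fin.isEmpty']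
  exact linearIndependent_empty_type

lemma rowsLI_of_sum_eq_rho (hd : ∑ j, d j = rho C) : RowsLI C d := by
  let A : Set ℕ := {ρ | ∀ d : Fin s → ℕ, ∑ j, d j = ρ → RowsLI C d}
  have hzero : 0 ∈ A := fun _ => rowsLI_of_sum_eq_zero
  have hmem : sSup A ∈ A := by
    by_cases hA : BddAbove A
    · exact Nat.sSup_mem ⟨0, hzero⟩ hA
    · rwa [Nat.sSup_of_not_bddAbove hA]
  exact hmem d hd

-- Over the zero ring every family is independent, so the supremum defining `rho` is `0`, the value
-- of `sSup` on unbounded sets.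
lemma nontrivial_of_rho_pos (hC : 0 < rho C) : Nontrivial (ZMod b) := by
  by_contra htriv
  rw [not_nontrivial_iff_subsingleton] at htriv
  have hLI (d : Fin s → ℕ) : RowsLI C d := linearIndependent_of_subsingleton
  simp [rho, hLI] at hC

lemma RowsLI.le_card_of_support_subset [Nontrivial (ZMod b)] {j : Fin s} {ρ : ℕ}
    {S : Finset (Fin m)} (h : RowsLI C (Pi.single j ρ)) (hS : ∀ i, ∀ r ∉ S, C j i r = 0) :
    ρ ≤ #S := by
  have hrow : ∀ p, ∀ r ∉ S, rowFamily C (Pi.single j ρ) p r = 0 := by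
    rintro ⟨j', i⟩ r hr
    obtain rfl | hj := eq_or_ne j' j
    · unfold rowFamily
      split_ifs
      exacts [hS _ r hr, rfl]
    · rw [Pi.single_eq_of_ne hj] at i
      exact i.elim0
  simpa using card_le_of_linearIndependent_of_support_subset h hrow

lemma rho_le_card_of_support_subset [Nontrivial (ZMod b)] {j : Fin s} {S : Finset (Fin m)}
    (hS : ∀ i, ∀ r ∉ S, C j i r = 0) : rho C ≤ #S :=
  csSup_le' fun ρ hρ => (hρ (Pi.single j ρ) (by simp)).le_card_of_support_subset hS

lemma rho_le [Nontrivial (ZMod b)] [Nonempty (Fin s)] : rho C ≤ m := by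
  obtain ⟨j⟩ := ‹Nonempty (Fin s)›
  simpa using rho_le_card_of_support_subset (C := C) (j := j) (S := univ) (by simp)

lemma RowsLI.of_submatrix (hnm : n ≤ m) (e : Fin n → Fin m) (hd : ∀ j, d j ≤ n)
    (h : RowsLI (fun j => (C j).submatrix (Fin.castLE hnm) e) d) : RowsLI C d := by
  have hrow : rowFamily (fun j => (C j).submatrix (Fin.castLE hnm) e) d =
      LinearMap.funLeft (ZMod b) (ZMod b) e ∘ rowFamily C d := by
    ext ⟨j, i⟩ r
    have hin : (i : ℕ) < n := i.2.trans_le (hd j)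
    simp [rowFamily, LinearMap.funLeft_apply, hin, hin.trans_le hnm]
  rw [RowsLI, hrow] at h
  exact h.of_comp

end Rho

namespace IsDigitalSeq

variable {b s t : ℕ} {D : Fin s → Matrix ℕ ℕ (ZMod b)}

protected lemma nontrivial (hD : IsDigitalSeq D t) : Nontrivial (ZMod b) :=
  nontrivial_of_rho_pos (C := fun j => upperLeft (D j) (t + 1))
    (by have := hD (t + 1) (by simp); omega)

lemma rho_upperLeft_eq [Nonempty (Fin s)] (hD : IsDigitalSeq D 0) (k : ℕ) :
    rho (fun j => upperLeft (D j) k) = k := by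
  have := hD.nontrivial
  refine rho_le.antisymm ?_
  obtain rfl | hk := Nat.eq_zero_or_pos k
  · exact Nat.zero_le _
  · exact hD k (max_le k.zero_le hk)

lemma rowsLI_upperLeft [Nonempty (Fin s)] (hD : IsDigitalSeq D 0) {k : ℕ} {d : Fin s → ℕ}
    (hd : ∑ j, d j = k) : RowsLI (fun j => upperLeft (D j) k) d :=
  rowsLI_of_sum_eq_rho (hd.trans (hD.rho_upperLeft_eq k).symm)

end IsDigitalSeq

lemma colReduce_zero {b m : ℕ} (C : Matrix (Fin m) (Fin m) (ZMod b)) : colReduce C 0 = C := by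
  ext i r
  simp [colReduce]

lemma cons_colReduce_eq {b m : ℕ} (A : Fin 2 → Matrix (Fin m) (Fin m) (ZMod b)) (w : ℕ) :
    ![A 0, colReduce (A 1) w] = fun j => colReduce (A j) (![0, w] j) := by
  ext j : 1
  fin_cases j <;> simp [colReduce_zero]

/-- The infinite matrix obtained from `D` by inserting `t` zero columns on the left. The columns
are indexed from `0`, so column `r ≥ t` is column `r - t` of `D`. -/
def prependZeroCols {b : ℕ} (t : ℕ) (D : Matrix ℕ ℕ (ZMod b)) : Matrix ℕ ℕ (ZMod b) :=
  Matrix.of fun i r => if r < t then 0 else D i (r - t)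

section PrependZeroCols

variable {b t m n w : ℕ}

lemma colReduce_upperLeft_prependZeroCols_apply (D : Matrix ℕ ℕ (ZMod b)) (i r : Fin m) :
    colReduce (upperLeft (prependZeroCols t D) m) w i r =
      if (r : ℕ) ∈ Ico t (m - w) then D i (r - t) else 0 := by
  simp only [colReduce, upperLeft, prependZeroCols, Matrix.of_apply, mem_Ico]
  split_ifs <;> first | rfl | omega

lemma submatrix_colReduce_upperLeft_prependZeroCols (D : Matrix ℕ ℕ (ZMod b)) (hnm : n ≤ m)
    (hn : n ≤ m - t - w) {e : Fin n → Fin m} (he : ∀ c, (e c : ℕ) = t + c) :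
    (colReduce (upperLeft (prependZeroCols t D) m) w).submatrix (Fin.castLE hnm) e =
      upperLeft D n := by
  ext i c
  have hc : t + (c : ℕ) ∈ Ico t (m - w) := mem_Ico.mpr (by omega)
  simp only [Matrix.submatrix_apply, colReduce_upperLeft_prependZeroCols_apply, he, if_pos hc]
  simp [upperLeft]

lemma exists_support_colReduce_upperLeft_prependZeroCols (t m w : ℕ) :
    ∃ S : Finset (Fin m), #S = m - t - w ∧ ∀ (D : Matrix ℕ ℕ (ZMod b)) (i : Fin m), ∀ r ∉ S,
      colReduce (upperLeft (prependZeroCols t D) m) w i r = 0 := by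
  have hlt : ∀ r ∈ Ico t (m - w), r < m := fun r hr =>
    (mem_Ico.mp hr).2.trans_le (Nat.sub_le m w)
  refine ⟨(Ico t (m - w)).attachFin hlt, ?_, fun D i r hr => ?_⟩
  · rw [card_attachFin, Nat.card_Ico, Nat.sub_right_comm]
  · rw [mem_attachFin] at hr
    rw [colReduce_upperLeft_prependZeroCols_apply, if_neg hr]

end PrependZeroCols

section Reduced

variable {b s t m n : ℕ} {D : Fin s → Matrix ℕ ℕ (ZMod b)} {w : Fin s → ℕ}

lemma RowsLI.le_of_colReduce_prependZeroCols [Nontrivial (ZMod b)] {i : Fin s} {ρ : ℕ}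
    (h : RowsLI (fun j => colReduce (upperLeft (prependZeroCols t (D j)) m) (w j))
      (Pi.single i ρ)) :
    ρ ≤ m - t - w i := by
  obtain ⟨S, hcard, hS⟩ := exists_support_colReduce_upperLeft_prependZeroCols (b := b) t m (w i)
  exact hcard ▸ h.le_card_of_support_subset (hS (D i))

lemma IsDigitalSeq.rowsLI_colReduce_prependZeroCols [Nonempty (Fin s)] (hD : IsDigitalSeq D 0)
    {d : Fin s → ℕ} (hd : ∑ j, d j = n) (hn : ∀ j, n ≤ m - t - w j) :
    RowsLI (fun j => colReduce (upperLeft (prependZeroCols t (D j)) m) (w j)) d := by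
  obtain ⟨j⟩ := ‹Nonempty (Fin s)›
  have hnj := hn j
  have hdn : ∀ j, d j ≤ n := fun j => hd ▸ single_le_sum_of_canonicallyOrdered (mem_univ j)
  refine RowsLI.of_submatrix (by omega) (fun c => ⟨t + c, by omega⟩) hdn ?_
  convert hD.rowsLI_upperLeft hd using 2 with j
  exact submatrix_colReduce_upperLeft_prependZeroCols _ _ (hn j) fun _ => rfl

end Reduced

-- The subtraction truncates: for `m < t + w j₀` the matrix indexed by `j₀` is zero and `rho` is
-- `0`.
theorem prepend_zero_cols_reduced_rho_eq_general {b s t m : ℕ} {D : Fin s → Matrix ℕ ℕ (ZMod b)}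
    (hD : IsDigitalSeq D 0) (w : Fin s → ℕ) {j₀ : Fin s} (hw : ∀ j, w j ≤ w j₀) :
    rho (fun j => colReduce (upperLeft (prependZeroCols t (D j)) m) (w j)) = m - t - w j₀ ∧
    ∀ i, ¬ RowsLI (fun j => colReduce (upperLeft (prependZeroCols t (D j)) m) (w j))
        (Pi.single i (m - t - w i + 1)) := by
  have := hD.nontrivial
  have : Nonempty (Fin s) := ⟨j₀⟩
  refine ⟨IsGreatest.csSup_eq ⟨fun d hd => ?_, fun ρ hρ => ?_⟩, fun i hi => ?_⟩
  · exact hD.rowsLI_colReduce_prependZeroCols hd fun j => Nat.sub_le_sub_left (hw j) _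
  · exact (hρ (Pi.single j₀ ρ) (by simp)).le_of_colReduce_prependZeroCols
  · exact (Nat.lt_succ_self _).not_ge hi.le_of_colReduce_prependZeroCols

/-- Remark 2 (sharpness of the lower bound): for the `(t,2)`-sequence obtained by
prepending `t` zero columns to a digital `(0,2)`-sequence, with reduction indices
`w_1 = 0` and `w_2` with `m - w_2 - t ≥ 0`, one has
`ρ_m(C̃_1^{(m)}, C̃_2^{(m)}) = m - t - w_2`; in particular the first `m - t - w_2 + 1`
rows of `C̃_2^{(m)}` are linearly dependent. -/
theorem prepend_zero_cols_reduced_rho_eq {b t m w₂ : ℕ} (hb : b.Prime)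
    (D C : Fin 2 → Matrix ℕ ℕ (ZMod b))
    (hD : ∀ k : ℕ, 1 ≤ k → rho (fun j => upperLeft (D j) k) = k)
    (hC : ∀ (j : Fin 2) (i r : ℕ), C j i r = if r < t then 0 else D j i (r - t))
    (hm : t ≤ m) (hw : w₂ + t ≤ m) :
    rho ![upperLeft (C 0) m, colReduce (upperLeft (C 1) m) w₂] = m - t - w₂ ∧
    ¬ RowsLI ![upperLeft (C 0) m, colReduce (upperLeft (C 1) m) w₂]
        ![0, m - t - w₂ + 1] := by
  have hD₀ : IsDigitalSeq D 0 := fun k hk => (hD k (by simpa using hk)).ge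
  obtain rfl : C = fun j => prependZeroCols t (D j) := by ext j i r; exact hC j i r
  have hsingle : ![0, m - t - w₂ + 1] = Pi.single 1 (m - t - w₂ + 1) := by
    ext j
    fin_cases j <;> rfl
  obtain ⟨hrho, hdep⟩ := prepend_zero_cols_reduced_rho_eq_general (t := t) (m := m) hD₀ ![0, w₂]
    (j₀ := 1) (by simp [Fin.forall_fin_two])
  rw [cons_colReduce_eq fun j => upperLeft (prependZeroCols t (D j)) m, hsingle]
  exact ⟨hrho, hdep 1⟩
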